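/- arXiv:2110.02147 — 5 statements merged into one kernel-verified Lean document; each statement's English description precedes it below -/
import Mathlib

section
/- Let c:ℕ→(0,∞) be nondecreasing with sup_n c_{n+k}/c_n < ∞ for every fixed k∈ℕ, and let T>0. For each letter B∈𝒲₁ (such that 𝒲_n^{B,a} is nonempty for some n) there exist a constant Const(B)>0, an integer K_B∈ℕ and group elements h_B, g_B ∈ G such that for all N>K_B, all t∈(0,T] and all g∈G: Const(B)⁻¹ · φ^{A,a}_{c;≤N−K_B}[t](h_B⁻¹g) ≤ φ^{B,a}_{c;≤N}[t](g) ≤ Const(B) · φ^{A,a}_{c;≤N+K_B}[t](g_B⁻¹g). If moreover T_𝔰 is topologically transitive, one may take g_B = h_B = e. -/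
open scoped ENNReal NNReal BigOperators
open Filter MeasureTheory

namespace CMS

variable {W : Type*} {G : Type*}

/-- One-sided countable Markov shift determined by the transition matrix `τ`. -/
def SigmaPlus (τ : W → W → Prop) : Set (ℕ → W) :=
  {x | ∀ i, τ (x i) (x (i + 1))}

/-- Two-sided shift space determined by the transition matrix `τ`. -/
def SigmaZ (τ : W → W → Prop) : Set (ℤ → W) :=
  {x | ∀ i, τ (x i) (x (i + 1))}

/-- The left shift on one-sided sequences. -/
def shift (x : ℕ → W) : ℕ → W := fun i => x (i + 1)

/-- The left shift on two-sided sequences. -/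
def shiftZ (x : ℤ → W) : ℤ → W := fun i => x (i + 1)

/-- `weight R n x = R(x) R(σ x) ⋯ R(σ^{n-1} x)`, the multiplicative Birkhoff weight `R_n`. -/
noncomputable def weight (R : (ℕ → W) → ℝ) (n : ℕ) (x : ℕ → W) : ℝ :=
  ∏ i ∈ Finset.range n, R (shift^[i] x)

/-- A finite word occurs somewhere inside a point of `Σ⁺`: admissibility. -/
def Occurs (τ : W → W → Prop) (w : List W) : Prop :=
  ∃ x ∈ SigmaPlus τ, ∃ k : ℕ, ∀ i : Fin w.length, x (k + i) = w.get i

/-- `𝒲_n^{B,b}` : admissible words of length `n`, first letter `B`, last letter `b`. -/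
def WordSet (τ : W → W → Prop) (n : ℕ) (B b : W) : Set (List W) :=
  {w | w.length = n ∧ Occurs τ w ∧ w.head? = some B ∧ w.getLast? = some b}

/-- Same, with admissibility given by consecutive allowed transitions
(as used for subshifts of finite type). -/
def WordSetC (τ : W → W → Prop) (n : ℕ) (B b : W) : Set (List W) :=
  {w | w.length = n ∧ w.Chain' τ ∧ w.head? = some B ∧ w.getLast? = some b}

/-- Concatenation `w x` of a finite word with a one-sided point. -/
def cat (w : List W) (x : ℕ → W) : ℕ → W := fun i =>
  if h : i < w.length then w.get ⟨i, h⟩ else x (i - w.length)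

/-- `𝔰̲(w) = 𝔰(w₁)⋯𝔰(w_n)`. -/
def wprod [Monoid G] (s : W → G) (w : List W) : G := (w.map s).prod

/-- Topological mixing of a countable Markov shift, stated combinatorially. -/
def Mixing (τ : W → W → Prop) : Prop :=
  ∀ B b : W, ∃ N : ℕ, ∀ n, N ≤ n → (WordSet τ n B b).Nonempty

/-- `log R` is locally Hölder with constants `C₀`, `θ`. -/
def LocallyHolder (τ : W → W → Prop) (R : (ℕ → W) → ℝ) (C₀ θ : ℝ) : Prop :=
  0 < C₀ ∧ 0 < θ ∧ θ < 1 ∧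
    ∀ x ∈ SigmaPlus τ, ∀ y ∈ SigmaPlus τ, ∀ n : ℕ, 2 ≤ n →
      (∀ i < n, x i = y i) → |Real.log (R x) - Real.log (R y)| ≤ C₀ * θ ^ n

/-- `Σ_{x∈[B], σⁿx=x} R_n(x)`. -/
noncomputable def Zper (τ : W → W → Prop) (R : (ℕ → W) → ℝ) (B : W) (n : ℕ) : ℝ≥0∞ :=
  ∑' p : {x : ℕ → W // x ∈ SigmaPlus τ ∧ shift^[n] x = x ∧ x 0 = B},
    ENNReal.ofReal (weight R n p.1)

/-- First-return version: `Σ {R_n(x) : x∈[B], σⁿx=x, x_i ≠ B for 0<i<n}`. -/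
noncomputable def ZperFR (τ : W → W → Prop) (R : (ℕ → W) → ℝ) (B : W) (n : ℕ) : ℝ≥0∞ :=
  ∑' p : {x : ℕ → W // x ∈ SigmaPlus τ ∧ shift^[n] x = x ∧ x 0 = B ∧
      ∀ i, 0 < i → i < n → x i ≠ B},
    ENNReal.ofReal (weight R n p.1)

/-- Periodic sums for the group extension, restricted to orbits whose
group displacement `𝔰̲(x₀⋯x_{n-1})` lies in `C`. -/
noncomputable def ZperExt [Monoid G] (τ : W → W → Prop) (R : (ℕ → W) → ℝ)
    (s : W → G) (C : Set G) (B : W) (n : ℕ) : ℝ≥0∞ :=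
  ∑' p : {x : ℕ → W // x ∈ SigmaPlus τ ∧ shift^[n] x = x ∧ x 0 = B ∧
      (List.ofFn fun i : Fin n => s (x i)).prod ∈ C},
    ENNReal.ofReal (weight R n p.1)

/-- Exponential growth rate `limsup Z_n^{1/n}`; equals `exp` of the Gurevič pressure. -/
noncomputable def growthRate (Z : ℕ → ℝ≥0∞) : ℝ≥0∞ :=
  Filter.limsup (fun n => Z n ^ (1 / (n : ℝ))) Filter.atTop

/-- positive recurrence of `R` in the sense of Sarig. -/
def PositiveRecurrent (τ : W → W → Prop) (R : (ℕ → W) → ℝ) : Prop :=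
  ∀ B : W, ∃ M : ℝ, 1 ≤ M ∧ ∀ n : ℕ, 1 ≤ n →
    (ENNReal.ofReal M)⁻¹ ≤ Zper τ R B n ∧ Zper τ R B n ≤ ENNReal.ofReal M

/-- Topological transitivity of the group extension `T_𝔰`, stated combinatorially. -/
def ExtTransitive [Group G] (τ : W → W → Prop) (s : W → G) : Prop :=
  ∀ B b : W, ∀ g : G, ∃ n : ℕ, ∃ w ∈ WordSet τ n B b, wprod s w = g

/-- Topological transitivity of the quotient extension `T_{𝔰_H}`. -/
def ExtTransitiveQ [Group G] (τ : W → W → Prop) (s : W → G) (H : Subgroup G) : Prop :=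
  ∀ B b : W, ∀ q : G ⧸ H, ∃ n : ℕ, ∃ w ∈ WordSet τ n B b,
    (QuotientGroup.mk (wprod s w) : G ⧸ H) = q

/-- The permutation of the canonical basis (indexed by the cosets in a countable
direct sum of quotients `G⧸H_j`) induced by a group element. -/
def rhoIdx [Group G] {J : Type*} (Hfam : J → Subgroup G) (g : G)
    (i : Σ j, G ⧸ Hfam j) : Σ j, G ⧸ Hfam j :=
  ⟨i.1, g • i.2⟩

/-- The convolution `φ ∗_ρ f = Σ_h φ(h) ρ(h) f`, in coordinates, where the
representation `ρ` permutes the basis indexed by `I` via `act`. -/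
noncomputable def convE {I : Type*} [Group G] (act : G → I → I)
    (φ : G → ℝ≥0∞) (f : I → ℝ≥0∞) : I → ℝ≥0∞ :=
  fun i => ∑' h : G, φ h * f (act h⁻¹ i)

/-- inner product of two nonnegative-cone vectors, in coordinates. -/
noncomputable def innerE {I : Type*} (u v : I → ℝ≥0∞) : ℝ≥0∞ := ∑' i, u i * v i

noncomputable def normSqE {I : Type*} (u : I → ℝ≥0∞) : ℝ≥0∞ := innerE u u

/-- membership in the Hilbert space (finite ℓ² norm): together with
nonnegativity of coordinates this is membership in the cone `𝓗₊`. -/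
def MemL2 {I : Type*} (f : I → ℝ≥0∞) : Prop := normSqE f < ⊤

/-- `φ*(g) = φ(g⁻¹)`. -/
def phiStar [Group G] (φ : G → ℝ≥0∞) : G → ℝ≥0∞ := fun g => φ g⁻¹

/-- The partial thermodynamic `G`-density
`φ^{B,a}_{c;≤N}[t](g) = Σ_{n=1}^N t^{-n} c_n Σ{R_n(wx) : w ∈ 𝒲_n^{B,a}, 𝔰̲(w)=g}`. -/
noncomputable def phiLe [Group G] (τ : W → W → Prop) (R : (ℕ → W) → ℝ) (s : W → G)
    (B a : W) (x : ℕ → W) (c : ℕ → ℝ) (t : ℝ) (N : ℕ) (g : G) : ℝ≥0∞ :=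
  ∑ n ∈ Finset.Icc 1 N, (ENNReal.ofReal t)⁻¹ ^ n * ENNReal.ofReal (c n) *
    ∑' w : {w : List W // w ∈ WordSet τ n B a ∧ wprod s w = g},
      ENNReal.ofReal (weight R n (cat w.1 x))

/-- Same with chain-admissibility (for subshifts of finite type). -/
noncomputable def phiLeC [Group G] (τ : W → W → Prop) (R : (ℕ → W) → ℝ) (s : W → G)
    (B a : W) (x : ℕ → W) (c : ℕ → ℝ) (t : ℝ) (N : ℕ) (g : G) : ℝ≥0∞ :=
  ∑ n ∈ Finset.Icc 1 N, (ENNReal.ofReal t)⁻¹ ^ n * ENNReal.ofReal (c n) *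
    ∑' w : {w : List W // w ∈ WordSetC τ n B a ∧ wprod s w = g},
      ENNReal.ofReal (weight R n (cat w.1 x))

/-- `γ(φ ∗_ρ f)`, the decay exponent for `f`. -/
noncomputable def gammaNorm {I : Type*} [Group G] (act : G → I → I)
    (τ : W → W → Prop) (R : (ℕ → W) → ℝ) (s : W → G) (A a : W) (x : ℕ → W)
    (f : I → ℝ≥0∞) : ℝ :=
  sInf {t : ℝ | 0 < t ∧
    (⨆ N, normSqE (convE act (phiLe τ R s A a x (fun _ => 1) t N) f)) < ⊤}

/-- `γ(f)`, defined through `⟨φ_{≤N}[t] ∗_ρ f, f⟩`. -/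
noncomputable def gammaInner {I : Type*} [Group G] (act : G → I → I)
    (τ : W → W → Prop) (R : (ℕ → W) → ℝ) (s : W → G) (A a : W) (x : ℕ → W)
    (f : I → ℝ≥0∞) : ℝ :=
  sInf {t : ℝ | 0 < t ∧
    (⨆ N, innerE (convE act (phiLe τ R s A a x (fun _ => 1) t N) f) f) < ⊤}

/-- `γ(φ* ∗_ρ f)`, defined through `⟨φ_{≤N}[t] ∗_ρ f, φ*_{≤N}[t] ∗_ρ f⟩`. -/
noncomputable def gammaPairStar {I : Type*} [Group G] (act : G → I → I)
    (τ : W → W → Prop) (R : (ℕ → W) → ℝ) (s : W → G) (A a : W) (x : ℕ → W)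
    (f : I → ℝ≥0∞) : ℝ :=
  sInf {t : ℝ | 0 < t ∧
    (⨆ N, innerE (convE act (phiLe τ R s A a x (fun _ => 1) t N) f)
      (convE act (phiStar (phiLe τ R s A a x (fun _ => 1) t N)) f)) < ⊤}

/-- Left translation action on `G` (for the left regular representation). -/
def leftMul (G : Type*) [Group G] : G → G → G := fun g x => g * x

/-- `δ_e`, the indicator of the identity. -/
noncomputable def deltaE (G : Type*) [Group G] : G → ℝ≥0∞ :=
  Set.indicator {(1 : G)} fun _ => (1 : ℝ≥0∞)

/-- The representation determined by the index action `act` has almost invariant vectors,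
i.e. weakly contains the trivial representation. -/
def HasAlmostInvariantVectors {I : Type*} [Group G] (act : G → I → I) : Prop :=
  ∀ F : Finset G, ∀ ε : ℝ, 0 < ε → ∃ v : I → ℝ,
    Summable (fun i => v i ^ 2) ∧ (∑' i, v i ^ 2) = 1 ∧
      ∀ g ∈ F, (∑' i, (v (act g⁻¹ i) - v i) ^ 2) ≤ ε ^ 2

/-- Amenability of a countable discrete group, via almost invariant vectors of
the left regular representation. -/
def Amenable (G : Type*) [Group G] : Prop :=
  HasAlmostInvariantVectors (leftMul G)

/-- Slowly increasing function. -/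
def SlowlyIncreasing (c : ℕ → ℝ) : Prop :=
  (∀ n, 0 < c n) ∧ Monotone c ∧ Tendsto c atTop atTop ∧
    ∀ k : ℕ, Tendsto (fun n => c (n + k) / c n) atTop (nhds 1)

/-- Cylinder set `[w]` in `Σ⁺`. -/
def cylP (τ : W → W → Prop) (w : List W) : Set {x : ℕ → W // x ∈ SigmaPlus τ} :=
  {x | ∀ i : Fin w.length, x.1 i = w.get i}

/-- `w ∧ x`: the number of initial coordinates in which a word agrees
with a one-sided point. -/
noncomputable def agreeLen (w : List W) (x : ℕ → W) : ℕ :=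
  sSup {k | w.take k = (List.range k).map x}

/-- The shift on the one-sided shift space. -/
def shiftPS (τ : W → W → Prop) (x : {y : ℕ → W // y ∈ SigmaPlus τ}) :
    {y : ℕ → W // y ∈ SigmaPlus τ} :=
  ⟨shift x.1, fun i => x.2 (i + 1)⟩

/-- The shift on the two-sided shift space. -/
def shiftZS (τ : W → W → Prop) (x : {y : ℤ → W // y ∈ SigmaZ τ}) :
    {y : ℤ → W // y ∈ SigmaZ τ} :=
  ⟨shiftZ x.1, fun i => x.2 (i + 1)⟩

/-- Negative-coordinate cylinder `[w.]` in the two-sided shift. -/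
def negCyl (τ : W → W → Prop) (w : List W) : Set {x : ℤ → W // x ∈ SigmaZ τ} :=
  {x | ∀ i : Fin w.length, x.1 (-(w.length : ℤ) + (i : ℕ)) = w.get i}


lemma shift_iter (x : ℕ → W) (k i : ℕ) : (shift^[k] x) i = x (k + i) := by
  induction k generalizing x with
  | zero => simp
  | succ k ih =>
    rw [Function.iterate_succ_apply, ih]
    simp only [shift]
    congr 1
    omega

lemma shift_mem {τ : W → W → Prop} {x : ℕ → W} (hx : x ∈ SigmaPlus τ) (k : ℕ) :
    shift^[k] x ∈ SigmaPlus τ := by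
  intro i
  rw [shift_iter, shift_iter]
  exact hx (k + i)

lemma cat_lt (u : List W) (z : ℕ → W) (i : ℕ) (h : i < u.length) : cat u z i = u[i] := by
  simp [cat, h]

lemma cat_add (u : List W) (z : ℕ → W) (i : ℕ) : cat u z (u.length + i) = z i := by
  simp [cat]

lemma cat_append (u w : List W) (z : ℕ → W) : cat (u ++ w) z = cat u (cat w z) := by
  funext i
  by_cases h : i < u.length
  · rw [cat_lt _ _ _ h, cat_lt _ _ _ (by simp; omega), List.getElem_append_left h]
  · obtain ⟨j, rfl⟩ := Nat.exists_eq_add_of_le (not_lt.1 h)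
    rw [cat_add]
    by_cases h2 : j < w.length
    · rw [cat_lt _ _ _ h2, cat_lt _ _ _ (by simp; omega),
        List.getElem_append_right (by omega)]
      simp
    · obtain ⟨l, rfl⟩ := Nat.exists_eq_add_of_le (not_lt.1 h2)
      rw [cat_add, ← Nat.add_assoc, ← List.length_append, cat_add]

lemma shift_cat (u : List W) (z : ℕ → W) : shift^[u.length] (cat u z) = z := by
  funext i
  rw [shift_iter, cat_add]

lemma cat_get (u : List W) (z : ℕ → W) (i : ℕ) (h : i < (u ++ [z 0]).length) :
    cat u z i = (u ++ [z 0])[i] := by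
  by_cases h1 : i < u.length
  · rw [cat_lt _ _ _ h1, List.getElem_append_left h1]
  · have h2 : i = u.length + 0 := by simp at h; omega
    subst h2
    rw [cat_add]
    simp

lemma occurs_ref {τ : W → W → Prop} {w : List W} (h : Occurs τ w) :
    ∃ y ∈ SigmaPlus τ, ∀ i (h : i < w.length), y i = w[i] := by
  obtain ⟨y, hy, k, hk⟩ := h
  refine ⟨shift^[k] y, shift_mem hy k, fun i hi => ?_⟩
  rw [shift_iter]
  exact hk ⟨i, hi⟩

lemma cat_mem {τ : W → W → Prop} {u : List W} {z : ℕ → W} (hz : z ∈ SigmaPlus τ)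
    (h : Occurs τ (u ++ [z 0])) : cat u z ∈ SigmaPlus τ := by
  obtain ⟨y, hy, hyu⟩ := occurs_ref h
  intro i
  by_cases h1 : i < u.length
  · rw [cat_get u z i (by simp; omega), cat_get u z (i + 1) (by simp; omega),
      ← hyu, ← hyu]
    exact hy i
  · obtain ⟨j, rfl⟩ := Nat.exists_eq_add_of_le (not_lt.1 h1)
    rw [cat_add, Nat.add_assoc, cat_add]
    exact hz j

lemma occurs_of_cat {τ : W → W → Prop} {u : List W} {z : ℕ → W}
    (h : cat u z ∈ SigmaPlus τ) : Occurs τ u :=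
  ⟨_, h, 0, fun i => by rw [Nat.zero_add, cat_lt _ _ _ i.2]; rfl⟩

lemma word_cat_mem {τ : W → W → Prop} {A a D : W} {x : ℕ → W} (hx : x ∈ SigmaPlus τ)
    (hxA : x 0 = A) (haA : Occurs τ [a, A]) {n : ℕ} {w : List W} (hw : w ∈ WordSet τ n D a) :
    cat w x ∈ SigmaPlus τ := by
  obtain ⟨-, ho, -, hl⟩ := hw
  obtain ⟨w', rfl⟩ := List.getLast?_eq_some_iff.1 hl
  rw [cat_append]
  apply cat_mem
  · apply cat_mem hx
    simpa [hxA] using haA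
  · simpa [cat] using ho

lemma weight_pos {τ : W → W → Prop} {R : (ℕ → W) → ℝ} (hR : ∀ x ∈ SigmaPlus τ, 0 < R x)
    {x : ℕ → W} (hx : x ∈ SigmaPlus τ) (n : ℕ) : 0 < weight R n x :=
  Finset.prod_pos fun i _ => hR _ (shift_mem hx i)

lemma weight_add (R : (ℕ → W) → ℝ) (k n : ℕ) (x : ℕ → W) :
    weight R (k + n) x = weight R k x * weight R n (shift^[k] x) := by
  simp only [weight, Finset.prod_range_add]
  congr 1
  refine Finset.prod_congr rfl fun i _ => ?_
  rw [← Function.iterate_add_apply, Nat.add_comm i k]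

lemma weight_lower {τ : W → W → Prop} {R : (ℕ → W) → ℝ} (hR : ∀ x ∈ SigmaPlus τ, 0 < R x)
    {C₀ θ : ℝ} (hH : LocallyHolder τ R C₀ θ) {y z : ℕ → W} (hy : y ∈ SigmaPlus τ)
    (hz : z ∈ SigmaPlus τ) (k : ℕ) (hyz : ∀ i ≤ k, z i = y i) :
    ∏ i ∈ Finset.range k, (R (shift^[i] y) * Real.exp (-(C₀ * θ ^ 2))) ≤ weight R k z := by
  apply Finset.prod_le_prod
  · intro i _
    exact (mul_pos (hR _ (shift_mem hy i)) (Real.exp_pos _)).le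
  · intro i hi
    have hi := Finset.mem_range.1 hi
    have h := hH.2.2.2 _ (shift_mem hz i) _ (shift_mem hy i) 2 le_rfl (by
      intro j hj
      rw [shift_iter, shift_iter]
      exact hyz _ (by omega))
    have h2 := (abs_le.1 h).1
    have hzp := hR _ (shift_mem hz i)
    have hyp := hR _ (shift_mem hy i)
    rw [← Real.exp_log hzp]
    nth_rewrite 1 [← Real.exp_log hyp]
    rw [← Real.exp_add]
    apply Real.exp_le_exp.2
    linarith

lemma phiLe_mono [Group G] (τ : W → W → Prop) (R : (ℕ → W) → ℝ) (s : W → G)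
    (B a : W) (x : ℕ → W) (c : ℕ → ℝ) (t : ℝ) {N M : ℕ} (h : N ≤ M) (g : G) :
    phiLe τ R s B a x c t N g ≤ phiLe τ R s B a x c t M g :=
  Finset.sum_le_sum_of_subset (Finset.Icc_subset_Icc_right h)

lemma key [Group G] {τ : W → W → Prop} {R : (ℕ → W) → ℝ} {s : W → G}
    (hR : ∀ x ∈ SigmaPlus τ, 0 < R x) (hHolder : ∃ C₀ θ : ℝ, LocallyHolder τ R C₀ θ)
    {A a : W} {x : ℕ → W} (hx : x ∈ SigmaPlus τ) (hxA : x 0 = A) (haA : Occurs τ [a, A])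
    {c : ℕ → ℝ} (hcmono : Monotone c) {T : ℝ} (hT : 0 < T)
    (D E : W) (u : List W) (ho : Occurs τ (u ++ [D])) (hh : (u ++ [D]).head? = some E) :
    ∃ C : ℝ, 0 < C ∧ ∀ (N : ℕ) (t : ℝ) (g : G), 0 < t → t ≤ T →
      phiLe τ R s D a x c t N g ≤
        ENNReal.ofReal C * phiLe τ R s E a x c t (N + u.length) (wprod s u * g) := by
  obtain ⟨C₀, θ, hH⟩ := hHolder
  obtain ⟨y, hy, hyu⟩ := occurs_ref ho
  set k := u.length with hk
  set q := ∏ i ∈ Finset.range k, (R (shift^[i] y) * Real.exp (-(C₀ * θ ^ 2))) with hq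
  have hqpos : 0 < q :=
    Finset.prod_pos fun i _ => mul_pos (hR _ (shift_mem hy i)) (Real.exp_pos _)
  refine ⟨T ^ k * q⁻¹, by positivity, fun N t g ht htT => ?_⟩
  -- facts about a single word
  have hfact : ∀ n, ∀ w ∈ WordSet τ n D a, (u ++ w) ∈ WordSet τ (k + n) E a ∧
      weight R n (cat w x) ≤ q⁻¹ * weight R (k + n) (cat (u ++ w) x) := by
    intro n w hw
    have hwx := word_cat_mem hx hxA haA hw
    obtain ⟨hlen, how, hhead, hlast⟩ := hw
    obtain ⟨w', rfl⟩ := List.head?_eq_some_iff.1 hhead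
    have h0 : cat (D :: w') x 0 = D := by simp [cat]
    have hm : cat u (cat (D :: w') x) ∈ SigmaPlus τ := cat_mem hwx (by rw [h0]; exact ho)
    refine ⟨⟨by simp [← hlen, hk], ?_, ?_, ?_⟩, ?_⟩
    · rw [← cat_append] at hm
      exact occurs_of_cat hm
    · cases u <;> simpa using hh
    · rw [List.getLast?_append, hlast]; rfl
    · rw [cat_append, weight_add, hk, shift_cat, ← hk]
      have hl := weight_lower hR hH hy hm k (by
        intro i hi
        have hi' : i < (u ++ [D]).length := by simp; omega
        rw [hyu i hi', cat_get _ _ _ (by simpa using hi')]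
        simp only [h0])
      have hp := weight_pos hR hwx n
      rw [← mul_assoc]
      have : 1 ≤ q⁻¹ * weight R k (cat u (cat (D :: w') x)) := by
        rw [inv_mul_eq_div, le_div_iff₀ hqpos, one_mul]
        exact hl
      exact le_mul_of_one_le_left hp.le this
  have hts : ∀ n, (∑' w : {w : List W // w ∈ WordSet τ n D a ∧ wprod s w = g},
      ENNReal.ofReal (weight R n (cat w.1 x))) ≤ ENNReal.ofReal q⁻¹ *
      ∑' w : {w : List W // w ∈ WordSet τ (k + n) E a ∧ wprod s w = wprod s u * g},
      ENNReal.ofReal (weight R (k + n) (cat w.1 x)) := by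
    intro n
    rw [← ENNReal.tsum_mul_left]
    let F : {w : List W // w ∈ WordSet τ n D a ∧ wprod s w = g} →
        {w : List W // w ∈ WordSet τ (k + n) E a ∧ wprod s w = wprod s u * g} :=
      fun w => ⟨u ++ w.1, (hfact n w.1 w.2.1).1, by
        have := w.2.2
        simp only [wprod] at this ⊢
        simp [this]⟩
    have hF : Function.Injective F := by
      intro w₁ w₂ h
      apply Subtype.ext
      have := congrArg Subtype.val h
      exact List.append_cancel_left this
    refine le_trans ?_ (ENNReal.tsum_comp_le_tsum_of_injective hF _)
    refine ENNReal.tsum_le_tsum fun w => ?_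
    rw [← ENNReal.ofReal_mul (inv_nonneg.2 hqpos.le)]
    exact ENNReal.ofReal_le_ofReal (hfact n w.1 w.2.1).2
  have htpow : ∀ n, (ENNReal.ofReal t)⁻¹ ^ n ≤
      ENNReal.ofReal (T ^ k) * (ENNReal.ofReal t)⁻¹ ^ (k + n) := by
    intro n
    rw [pow_add, ← mul_assoc, ENNReal.ofReal_pow hT.le, ← mul_pow]
    refine le_mul_of_one_le_left zero_le (one_le_pow₀ ?_)
    calc (1 : ℝ≥0∞) = ENNReal.ofReal t * (ENNReal.ofReal t)⁻¹ :=
          (ENNReal.mul_inv_cancel (by simpa using ht) ENNReal.ofReal_ne_top).symm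
      _ ≤ _ := by gcongr
  unfold phiLe
  set f : ℕ → ℝ≥0∞ := fun m => (ENNReal.ofReal t)⁻¹ ^ m * ENNReal.ofReal (c m) *
    ∑' w : {w : List W // w ∈ WordSet τ m E a ∧ wprod s w = wprod s u * g},
      ENNReal.ofReal (weight R m (cat w.1 x)) with hf
  calc _ ≤ ∑ n ∈ Finset.Icc 1 N, ENNReal.ofReal (T ^ k * q⁻¹) * f (k + n) := by
        refine Finset.sum_le_sum fun n _ => ?_
        rw [ENNReal.ofReal_mul (by positivity)]
        calc _ ≤ (ENNReal.ofReal (T ^ k) * (ENNReal.ofReal t)⁻¹ ^ (k + n)) *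
              ENNReal.ofReal (c (k + n)) * (ENNReal.ofReal q⁻¹ * _) :=
              mul_le_mul' (mul_le_mul' (htpow n)
                (ENNReal.ofReal_le_ofReal (hcmono (by omega)))) (hts n)
          _ = _ := by simp only [hf]; ring
    _ = ENNReal.ofReal (T ^ k * q⁻¹) * ∑ n ∈ Finset.Icc 1 N, f (k + n) := by
        rw [Finset.mul_sum]
    _ ≤ _ := by
        refine mul_le_mul' le_rfl ?_
        rw [← Finset.sum_image (f := f) (s := Finset.Icc 1 N) (g := fun n => k + n)
          (fun a _ b _ h => by simpa using h)]
        refine Finset.sum_le_sum_of_subset ?_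
        intro m hm
        simp only [Finset.mem_image, Finset.mem_Icc] at hm ⊢
        omega

lemma two_sided [Group G] {τ : W → W → Prop} {R : (ℕ → W) → ℝ} {s : W → G}
    (hR : ∀ x ∈ SigmaPlus τ, 0 < R x) (hHolder : ∃ C₀ θ : ℝ, LocallyHolder τ R C₀ θ)
    {A a : W} {x : ℕ → W} (hx : x ∈ SigmaPlus τ) (hxA : x 0 = A) (haA : Occurs τ [a, A])
    {c : ℕ → ℝ} (hcmono : Monotone c) {T : ℝ} (hT : 0 < T)
    (B : W) (u v : List W) (hou : Occurs τ (u ++ [A])) (hhu : (u ++ [A]).head? = some B)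
    (hov : Occurs τ (v ++ [B])) (hhv : (v ++ [B]).head? = some A) :
    ∃ Const : ℝ, 0 < Const ∧ ∃ K : ℕ,
        ∀ N : ℕ, ∀ t : ℝ, ∀ g : G, K < N → 0 < t → t ≤ T →
          (ENNReal.ofReal Const)⁻¹ * phiLe τ R s A a x c t (N - K) ((wprod s u)⁻¹ * g)
              ≤ phiLe τ R s B a x c t N g ∧
            phiLe τ R s B a x c t N g
              ≤ ENNReal.ofReal Const *
                phiLe τ R s A a x c t (N + K) (((wprod s v)⁻¹)⁻¹ * g) := by
  obtain ⟨C₁, hC₁, h₁⟩ := key (s := s) hR hHolder hx hxA haA hcmono hT A B u hou hhu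
  obtain ⟨C₂, hC₂, h₂⟩ := key (s := s) hR hHolder hx hxA haA hcmono hT B A v hov hhv
  refine ⟨max C₁ C₂, lt_max_of_lt_left hC₁, u.length + v.length, fun N t g hN ht htT => ⟨?_, ?_⟩⟩
  · rw [mul_comm, ← div_eq_mul_inv]
    apply ENNReal.div_le_of_le_mul'
    refine (h₁ _ t _ ht htT).trans ?_
    rw [mul_inv_cancel_left]
    exact mul_le_mul' (ENNReal.ofReal_le_ofReal (le_max_left _ _))
      (phiLe_mono _ _ _ _ _ _ _ _ (by omega) _)
  · refine (h₂ N t g ht htT).trans ?_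
    rw [inv_inv]
    exact mul_le_mul' (ENNReal.ofReal_le_ofReal (le_max_right _ _))
      (phiLe_mono _ _ _ _ _ _ _ _ (by omega) _)

lemma word_split {τ : W → W → Prop} {n : ℕ} {E D : W} {w : List W}
    (hw : w ∈ WordSet τ n E D) :
    ∃ u : List W, w = u ++ [D] ∧ Occurs τ (u ++ [D]) ∧ (u ++ [D]).head? = some E := by
  obtain ⟨-, ho, hh, hl⟩ := hw
  obtain ⟨u, rfl⟩ := List.getLast?_eq_some_iff.1 hl
  exact ⟨u, rfl, ho, hh⟩

/-- (Lemma `lemma:changeletter`.) Comparison of the thermodynamic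
densities `φ^{B,a}_{c;≤N}[t]` and `φ^{A,a}_{c;≤N}[t]` up to a constant, a shift of the
truncation index and a group translation; under transitivity of `T_𝔰` the group
translations may be taken trivial. -/
theorem statement7 {W G : Type*} [Countable W] [Countable G] [Group G]
    (τ : W → W → Prop) (R : (ℕ → W) → ℝ) (s : W → G)
    (hmix : Mixing τ)
    (hRpos : ∀ x ∈ SigmaPlus τ, 0 < R x)
    (hHolder : ∃ C₀ θ : ℝ, LocallyHolder τ R C₀ θ)
    (A a : W) (x : ℕ → W)
    (hx : x ∈ SigmaPlus τ) (hxA : x 0 = A) (haA : Occurs τ [a, A])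
    (c : ℕ → ℝ) (hcpos : ∀ n, 0 < c n) (hcmono : Monotone c)
    (hcquot : ∀ k : ℕ, ∃ Ck : ℝ, ∀ n : ℕ, c (n + k) ≤ Ck * c n)
    (T : ℝ) (hT : 0 < T) :
    (∀ B : W, (∃ n : ℕ, (WordSet τ n B a).Nonempty) →
      ∃ Const : ℝ, 0 < Const ∧ ∃ K : ℕ, ∃ hB gB : G,
        ∀ N : ℕ, ∀ t : ℝ, ∀ g : G, K < N → 0 < t → t ≤ T →
          (ENNReal.ofReal Const)⁻¹ * phiLe τ R s A a x c t (N - K) (hB⁻¹ * g)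
              ≤ phiLe τ R s B a x c t N g ∧
            phiLe τ R s B a x c t N g
              ≤ ENNReal.ofReal Const * phiLe τ R s A a x c t (N + K) (gB⁻¹ * g)) ∧
    (ExtTransitive τ s →
      ∀ B : W, (∃ n : ℕ, (WordSet τ n B a).Nonempty) →
        ∃ Const : ℝ, 0 < Const ∧ ∃ K : ℕ,
          ∀ N : ℕ, ∀ t : ℝ, ∀ g : G, K < N → 0 < t → t ≤ T →
            (ENNReal.ofReal Const)⁻¹ * phiLe τ R s A a x c t (N - K) g
                ≤ phiLe τ R s B a x c t N g ∧
              phiLe τ R s B a x c t N g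
                ≤ ENNReal.ofReal Const * phiLe τ R s A a x c t (N + K) g) := by
  constructor
  · intro B _
    obtain ⟨n₁, h₁⟩ := hmix B A
    obtain ⟨n₂, h₂⟩ := hmix A B
    obtain ⟨w₁, hw₁⟩ := h₁ n₁ le_rfl
    obtain ⟨w₂, hw₂⟩ := h₂ n₂ le_rfl
    obtain ⟨u, -, hou, hhu⟩ := word_split hw₁
    obtain ⟨v, -, hov, hhv⟩ := word_split hw₂
    obtain ⟨C, hC, K, h⟩ := two_sided (s := s) hRpos hHolder hx hxA haA hcmono hT B u v
      hou hhu hov hhv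
    exact ⟨C, hC, K, _, _, h⟩
  · intro htr B _
    obtain ⟨n₁, w₁, hw₁, hp₁⟩ := htr B A (s A)
    obtain ⟨n₂, w₂, hw₂, hp₂⟩ := htr A B (s B)
    obtain ⟨u, rfl, hou, hhu⟩ := word_split hw₁
    obtain ⟨v, rfl, hov, hhv⟩ := word_split hw₂
    have hu : wprod s u = 1 := by simpa [wprod] using hp₁
    have hv : wprod s v = 1 := by simpa [wprod] using hp₂
    obtain ⟨C, hC, K, h⟩ := two_sided (s := s) hRpos hHolder hx hxA haA hcmono hT B u v
      hou hhu hov hhv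
    refine ⟨C, hC, K, ?_⟩
    simpa [hu, hv] using h

end CMS
end

section
/- Let G be a countable amenable group, S=S⁻¹ a finite symmetric generating set of G such that the semigroup generated by S equals G, and p:S→(0,1] a symmetric probability on S (p(s)=p(s⁻¹), Σ_{s∈S}p(s)=1). Let λ be the left regular representation of G on ℓ²(G,ℝ). Then for every γ∈(0,1) there is a vector v∈ℓ²₊(G) and an integer M such that for every n≥M and every tuple (s₁,…,s_n)∈Sⁿ, ⟨λ(s₁s₂⋯s_n)v, v⟩ ≥ γⁿ. -/
open scoped ENNReal NNReal BigOperators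
open Filter MeasureTheory

namespace CMS

variable {W : Type*} {G : Type*}

/-- (Lemma `lemma:amenablevectordecay`.) For an amenable group
with a finite symmetric generating set `S` generating `G` as a semigroup and a
symmetric probability `p` on `S`: for every `γ ∈ (0,1)` there are `v ∈ ℓ²₊(G)` and
`M` such that `⟨λ(s₁⋯s_n) v, v⟩ ≥ γⁿ` for all `n ≥ M` and all `(s₁,…,s_n) ∈ Sⁿ`. -/
theorem statement11 {G : Type*} [Countable G] [Group G]
    (S : Finset G) (hSsym : ∀ g ∈ S, g⁻¹ ∈ S)
    (hgen : ∀ g : G, ∃ w : List G, w ≠ [] ∧ (∀ u ∈ w, u ∈ S) ∧ w.prod = g)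
    (p : G → ℝ)
    (hppos : ∀ g ∈ S, 0 < p g) (hple : ∀ g ∈ S, p g ≤ 1)
    (hpsum : ∑ g ∈ S, p g = 1)
    (hpsym : ∀ g : G, p g = p g⁻¹)
    (hamen : Amenable G) :
    ∀ γ : ℝ, 0 < γ → γ < 1 →
      ∃ v : G → ℝ, (∀ g : G, 0 ≤ v g) ∧ Summable (fun g => v g ^ 2) ∧
        ∃ M : ℕ, ∀ n, M ≤ n → ∀ w : List G, w.length = n → (∀ u ∈ w, u ∈ S) →
          γ ^ n ≤ ∑' z : G, v ((w.prod)⁻¹ * z) * v z := by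
  intro γ hγ0 hγ1
  -- the finite set of products of words of length `n`
  have hfin : ∀ n : ℕ, ∃ F : Finset G, ∀ w : List G, w.length = n → (∀ u ∈ w, u ∈ S) →
      w.prod ∈ F := by
    classical
    intro n
    induction n with
    | zero =>
      refine ⟨{1}, fun w hw _ => ?_⟩
      rw [List.length_eq_zero_iff] at hw
      simp [hw]
    | succ k ih =>
      obtain ⟨F, hF⟩ := ih
      refine ⟨Finset.image₂ (fun a b => a * b) S F, fun w hw hS => ?_⟩
      cases w with
      | nil => simp at hw
      | cons a t =>
        rw [List.prod_cons]
        exact Finset.mem_image₂_of_mem (hS a (by simp))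
          (hF t (by simpa using hw) (fun u hu => hS u (by simp [hu])))
  choose F hF using hfin
  have hv := fun n => hamen (F n) 1 one_pos
  choose v hvs hv1 hvF using hv
  -- weighted family
  have hgeo : Summable (fun n : ℕ => 2 * γ ^ n) :=
    (summable_geometric_of_lt_one hγ0.le hγ1).mul_left 2
  have hprod : Summable (fun q : ℕ × G => 2 * γ ^ q.1 * v q.1 q.2 ^ 2) := by
    rw [summable_prod_of_nonneg (fun q => by positivity)]
    refine ⟨fun n => Summable.mul_left (2 * γ ^ n) (hvs n), ?_⟩
    simp only [tsum_mul_left, hv1, mul_one]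
    exact hgeo
  have hsw : Summable (fun q : G × ℕ => 2 * γ ^ q.2 * v q.2 q.1 ^ 2) := hprod.prod_symm
  have hfib : ∀ x : G, Summable (fun n : ℕ => 2 * γ ^ n * v n x ^ 2) :=
    fun x => hsw.prod_factor x
  have hsum : Summable (fun x : G => ∑' n : ℕ, 2 * γ ^ n * v n x ^ 2) := hsw.prod
  have hnn : ∀ x : G, 0 ≤ ∑' n : ℕ, 2 * γ ^ n * v n x ^ 2 :=
    fun x => tsum_nonneg fun n => by positivity
  obtain ⟨V, hV0, hVsq⟩ : ∃ V : G → ℝ, (∀ x, 0 ≤ V x) ∧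
      ∀ x, V x ^ 2 = ∑' n : ℕ, 2 * γ ^ n * v n x ^ 2 :=
    ⟨fun x => Real.sqrt (∑' n : ℕ, 2 * γ ^ n * v n x ^ 2), fun x => Real.sqrt_nonneg _,
      fun x => Real.sq_sqrt (hnn x)⟩
  have hVs : Summable (fun x => V x ^ 2) := by simpa only [hVsq] using hsum
  refine ⟨V, hV0, hVs, 0, ?_⟩
  intro n _ w hw hS
  have hgF : w.prod ∈ F n := hF n w hw hS
  generalize w.prod = g at hgF ⊢
  have hinv := hvF n g hgF
  simp only [leftMul] at hinv
  -- translates and products are summable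
  have htr : ∀ f : G → ℝ, Summable f → Summable (fun z => f (g⁻¹ * z)) := fun f hf =>
    (Equiv.mulLeft g⁻¹).summable_iff.mpr hf
  have hmul : ∀ f : G → ℝ, Summable (fun z => f z ^ 2) →
      Summable (fun z => f (g⁻¹ * z) * f z) := by
    intro f hf
    refine Summable.of_norm_bounded ((htr _ hf).add hf) fun z => ?_
    rw [Real.norm_eq_abs, abs_le]
    constructor <;> nlinarith [sq_nonneg (f (g⁻¹ * z) + f z), sq_nonneg (f (g⁻¹ * z) - f z),
      sq_nonneg (f (g⁻¹ * z)), sq_nonneg (f z)]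
  have hb : ∀ x, 2 * γ ^ n * v n x ^ 2 ≤ V x ^ 2 := fun x => by
    rw [hVsq]
    exact (hfib x).le_tsum n fun j _ => by positivity
  have hpt : ∀ z, 2 * γ ^ n * (v n (g⁻¹ * z) * v n z) ≤ V (g⁻¹ * z) * V z := by
    intro z
    refine abs_le_of_sq_le_sq' ?_ (mul_nonneg (hV0 _) (hV0 _)) |>.2
    calc (2 * γ ^ n * (v n (g⁻¹ * z) * v n z)) ^ 2
        = (2 * γ ^ n * v n (g⁻¹ * z) ^ 2) * (2 * γ ^ n * v n z ^ 2) := by ring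
      _ ≤ V (g⁻¹ * z) ^ 2 * V z ^ 2 :=
        mul_le_mul (hb _) (hb _) (by positivity) (by positivity)
      _ = (V (g⁻¹ * z) * V z) ^ 2 := by ring
  have hms := hmul _ (hvs n)
  have hle : 2 * γ ^ n * ∑' z, v n (g⁻¹ * z) * v n z ≤ ∑' z, V (g⁻¹ * z) * V z := by
    rw [← tsum_mul_left]
    exact (hms.mul_left _).tsum_le_tsum hpt (hmul V hVs)
  have hshift : ∑' z, v n (g⁻¹ * z) ^ 2 = 1 := by
    rw [← hv1 n]
    exact (Equiv.mulLeft g⁻¹).tsum_eq (fun z => v n z ^ 2)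
  have hexp : ∑' z, (v n (g⁻¹ * z) - v n z) ^ 2
      = 1 + 1 - 2 * ∑' z, v n (g⁻¹ * z) * v n z := by
    have h1 := htr _ (hvs n)
    rw [← tsum_mul_left]
    nth_rewrite 1 [← hshift]
    rw [← hv1 n, ← h1.tsum_add (hvs n), ← (h1.add (hvs n)).tsum_sub (hms.mul_left 2)]
    exact tsum_congr fun z => by ring
  have hhalf : 1 / 2 ≤ ∑' z, v n (g⁻¹ * z) * v n z := by linarith
  have hpow : 0 < γ ^ n := pow_pos hγ0 n
  nlinarith

end CMS
end

section
/- Let (B_n)_{n≥1} be a sequence of nonnegative reals with γ := limsup_{n→∞} B_n^{1/n} ∈ (0,∞). Then there exists c:ℕ→(0,∞) such that: (i) c is nondecreasing and c_n→∞; (ii) c_{n+k}/c_n → 1 as n→∞ for every fixed k (c is slowly increasing); (iii) c_{n+k} ≤ c_n·c_k for all n,k; (iv) Σ_{n=1}^∞ γ^{−n} c_n B_n = ∞; and (v) Σ_{n=1}^∞ t^{−n} c_n B_n < ∞ for every t>γ. -/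
open scoped ENNReal NNReal BigOperators
open Filter MeasureTheory

namespace CMS

variable {W : Type*} {G : Type*}

/-- The concave logarithm of the sequence `c`. -/
noncomputable def hSum (m : ℕ → ℕ) (n : ℕ) : ℝ :=
  ∑' j : ℕ, (1 / 2 : ℝ) ^ j * ((min n (m j) : ℕ) : ℝ)

theorem hSum_summable (m : ℕ → ℕ) (n : ℕ) :
    Summable (fun j : ℕ => (1 / 2 : ℝ) ^ j * ((min n (m j) : ℕ) : ℝ)) := by
  refine Summable.of_nonneg_of_le (fun j => by positivity) (fun j => ?_)
    (summable_geometric_two.mul_right (n : ℝ))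
  have : ((min n (m j) : ℕ) : ℝ) ≤ n := by exact_mod_cast min_le_left _ _
  gcongr

theorem hSum_mono (m : ℕ → ℕ) : Monotone (hSum m) := by
  intro a b hab
  refine Summable.tsum_le_tsum (fun j => ?_) (hSum_summable m a) (hSum_summable m b)
  have : ((min a (m j) : ℕ) : ℝ) ≤ ((min b (m j) : ℕ) : ℝ) := by
    exact_mod_cast min_le_min_right _ hab
  gcongr

theorem hSum_sub (m : ℕ → ℕ) (n k : ℕ) : hSum m (n + k) ≤ hSum m n + hSum m k := by
  unfold hSum
  rw [← (hSum_summable m n).tsum_add (hSum_summable m k)]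
  refine Summable.tsum_le_tsum (fun j => ?_) (hSum_summable m (n + k))
    ((hSum_summable m n).add (hSum_summable m k))
  have : ((min (n + k) (m j) : ℕ) : ℝ) ≤ ((min n (m j) : ℕ) : ℝ) + ((min k (m j) : ℕ) : ℝ) := by
    have : min (n + k) (m j) ≤ min n (m j) + min k (m j) := by omega
    exact_mod_cast this
  rw [← mul_add]
  gcongr

theorem hSum_ge (m : ℕ → ℕ) (j : ℕ) : (1 / 2 : ℝ) ^ j * (m j : ℝ) ≤ hSum m (m j) := by
  have := (hSum_summable m (m j)).le_tsum j (fun i _ => by positivity)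
  simpa [hSum] using this

theorem hSum_incr (m : ℕ → ℕ) (k : ℕ) :
    Tendsto (fun n => hSum m (n + k) - hSum m n) atTop (nhds 0) := by
  have key : Tendsto (fun n => ∑' j : ℕ, ((1 / 2 : ℝ) ^ j * ((min (n + k) (m j) : ℕ) : ℝ)
      - (1 / 2 : ℝ) ^ j * ((min n (m j) : ℕ) : ℝ))) atTop (nhds (∑' _ : ℕ, (0 : ℝ))) := by
    refine tendsto_tsum_of_dominated_convergence (bound := fun j => (1 / 2 : ℝ) ^ j * (k : ℝ))
      (summable_geometric_two.mul_right (k : ℝ)) (fun j => ?_) (Eventually.of_forall ?_)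
    · refine tendsto_const_nhds.congr' ?_
      filter_upwards [eventually_ge_atTop (m j)] with n hn
      rw [min_eq_right hn, min_eq_right (by omega : m j ≤ n + k), sub_self]
    · intro n j
      have h1 : ((min n (m j) : ℕ) : ℝ) ≤ ((min (n + k) (m j) : ℕ) : ℝ) := by
        have : min n (m j) ≤ min (n + k) (m j) := by omega
        exact_mod_cast this
      have h2 : ((min (n + k) (m j) : ℕ) : ℝ) ≤ ((min n (m j) : ℕ) : ℝ) + k := by
        have : min (n + k) (m j) ≤ min n (m j) + k := by omega
        exact_mod_cast this
      rw [← mul_sub, Real.norm_eq_abs, abs_of_nonneg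
        (mul_nonneg (by positivity) (by linarith))]
      gcongr
      linarith
  rw [tsum_zero] at key
  refine key.congr (fun n => ?_)
  exact (hSum_summable m (n + k)).tsum_sub (hSum_summable m n)

theorem exists_index (B : ℕ → ℝ) (γ : ℝ) (hγpos : 0 < γ)
    (hγ : Filter.limsup (fun n => (ENNReal.ofReal (B n)) ^ (1 / (n : ℝ))) Filter.atTop
      = ENNReal.ofReal γ) (j : ℕ) :
    ∃ n : ℕ, j * 2 ^ j ≤ n ∧ j ≤ n ∧
      γ ^ n * Real.exp (-((1 / 2 : ℝ) ^ j * n)) ≤ B n := by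
  have hlt : ENNReal.ofReal (γ * Real.exp (-(1 / 2 : ℝ) ^ j)) <
      Filter.limsup (fun n => (ENNReal.ofReal (B n)) ^ (1 / (n : ℝ))) Filter.atTop := by
    rw [hγ]
    apply (ENNReal.ofReal_lt_ofReal_iff hγpos).2
    have : Real.exp (-(1 / 2 : ℝ) ^ j) < 1 := Real.exp_lt_one_iff.2 (by
      have : (0 : ℝ) < (1 / 2 : ℝ) ^ j := by positivity
      linarith)
    nlinarith
  have hf := frequently_lt_of_lt_limsup (by isBoundedDefault) hlt
  obtain ⟨n, hn, hn2⟩ := (hf.and_eventually (eventually_ge_atTop (j * 2 ^ j + j + 1))).exists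
  refine ⟨n, by omega, by omega, ?_⟩
  have hn0 : (n : ℝ) ≠ 0 := by
    have : n ≠ 0 := by omega
    exact_mod_cast this
  have h3 := pow_le_pow_left₀ zero_le hn.le n
  rw [← ENNReal.rpow_natCast (_ ^ (1 / (n : ℝ))), ← ENNReal.rpow_mul,
    one_div_mul_cancel hn0, ENNReal.rpow_one, ← ENNReal.ofReal_pow (by positivity),
    ENNReal.ofReal_le_ofReal_iff'] at h3
  have hpos : 0 < (γ * Real.exp (-(1 / 2 : ℝ) ^ j)) ^ n := by positivity
  have h4 := h3.resolve_right (not_le.2 hpos)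
  rw [mul_pow, ← Real.exp_nat_mul] at h4
  convert h4 using 3
  ring

theorem eventually_upper (B : ℕ → ℝ) (hB : ∀ n, 0 ≤ B n) (γ : ℝ)
    (hγ : Filter.limsup (fun n => (ENNReal.ofReal (B n)) ^ (1 / (n : ℝ))) Filter.atTop
      = ENNReal.ofReal γ) (s : ℝ) (hs : γ < s) (hs0 : 0 < s) :
    ∀ᶠ n in atTop, B n ≤ s ^ n := by
  have hlt : Filter.limsup (fun n => (ENNReal.ofReal (B n)) ^ (1 / (n : ℝ))) Filter.atTop
      < ENNReal.ofReal s := by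
    rw [hγ]
    exact (ENNReal.ofReal_lt_ofReal_iff hs0).2 hs
  have hf := eventually_lt_of_limsup_lt hlt (by isBoundedDefault)
  filter_upwards [hf, eventually_ge_atTop 1] with n hn hn1
  have hn0 : (n : ℝ) ≠ 0 := by
    have : n ≠ 0 := by omega
    exact_mod_cast this
  have h3 := pow_le_pow_left₀ zero_le hn.le n
  rw [← ENNReal.rpow_natCast (_ ^ (1 / (n : ℝ))), ← ENNReal.rpow_mul,
    one_div_mul_cancel hn0, ENNReal.rpow_one, ← ENNReal.ofReal_pow (by positivity)] at h3
  exact (ENNReal.ofReal_le_ofReal_iff (by positivity)).1 h3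

/-- (Proposition `prop:divseries2`.) Given a nonnegative sequence
`B_n` with radius parameter `γ = limsup B_n^{1/n} ∈ (0,∞)`, there is a slowly
increasing, submultiplicative `c` making the series `Σ t^{-n} c_n B_n` diverge at
`t = γ` while still converging for every `t > γ`. -/
theorem statement13 (B : ℕ → ℝ) (hB : ∀ n, 0 ≤ B n)
    (γ : ℝ) (hγpos : 0 < γ)
    (hγ : Filter.limsup (fun n => (ENNReal.ofReal (B n)) ^ (1 / (n : ℝ))) Filter.atTop
      = ENNReal.ofReal γ) :
    ∃ c : ℕ → ℝ,
      (∀ n, 0 < c n) ∧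
      Monotone c ∧
      Tendsto c atTop atTop ∧
      (∀ k : ℕ, Tendsto (fun n => c (n + k) / c n) atTop (nhds 1)) ∧
      (∀ n k : ℕ, c (n + k) ≤ c n * c k) ∧
      (∑' n : ℕ, ENNReal.ofReal (γ⁻¹ ^ n * c n * B n)) = ⊤ ∧
      (∀ t : ℝ, γ < t → (∑' n : ℕ, ENNReal.ofReal (t⁻¹ ^ n * c n * B n)) < ⊤) := by
  choose m hm1 hm2 hm3 using exists_index B γ hγpos hγ
  have hratio : ∀ k : ℕ, Tendsto (fun n => Real.exp (hSum m (n + k)) / Real.exp (hSum m n))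
      atTop (nhds 1) := by
    intro k
    have := (Real.continuous_exp.tendsto 0).comp (hSum_incr m k)
    rw [Real.exp_zero] at this
    refine this.congr (fun n => ?_)
    simp [Real.exp_sub]
  refine ⟨fun n => Real.exp (hSum m n), fun n => Real.exp_pos _,
    fun a b hab => Real.exp_le_exp.2 (hSum_mono m hab), ?_, hratio, ?_, ?_, ?_⟩
  · refine Real.tendsto_exp_atTop.comp ?_
    refine tendsto_atTop_atTop_of_monotone (hSum_mono m) (fun b => ?_)
    obtain ⟨j, hj⟩ := exists_nat_ge b
    refine ⟨m j, hj.trans (le_trans ?_ (hSum_ge m j))⟩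
    have : ((j * 2 ^ j : ℕ) : ℝ) ≤ m j := by exact_mod_cast hm1 j
    push_cast at this
    calc (j : ℝ) = (1 / 2 : ℝ) ^ j * (j * 2 ^ j) := by
          rw [mul_left_comm, ← mul_pow]; norm_num
      _ ≤ _ := by gcongr
  · intro n k
    rw [← Real.exp_add]
    exact Real.exp_le_exp.2 (hSum_sub m n k)
  · by_contra hne
    have ht := ENNReal.tendsto_atTop_zero_of_tsum_ne_top hne
    obtain ⟨N, hN⟩ := eventually_atTop.1 (ht.eventually (gt_mem_nhds (zero_lt_one)))
    have h1 := hN (m N) (hm2 N)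
    rw [← ENNReal.ofReal_one, ENNReal.ofReal_lt_ofReal_iff (by norm_num)] at h1
    have h2 := hm3 N
    have h4 := Real.exp_le_exp.2 (hSum_ge m N)
    have h5 : (1 : ℝ) ≤ γ⁻¹ ^ (m N) * Real.exp (hSum m (m N)) * B (m N) := by
      calc (1 : ℝ) = γ⁻¹ ^ (m N) * Real.exp ((1 / 2 : ℝ) ^ N * (m N : ℝ)) *
            (γ ^ (m N) * Real.exp (-((1 / 2 : ℝ) ^ N * (m N : ℝ)))) := by
            rw [Real.exp_neg, inv_pow]
            have := Real.exp_ne_zero ((1 / 2 : ℝ) ^ N * (m N : ℝ))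
            field_simp
        _ ≤ _ := by gcongr
    linarith
  · intro t ht
    obtain ⟨s, hs1, hs2⟩ := exists_between ht
    have hs0 : 0 < s := hγpos.trans hs1
    have ht0 : 0 < t := hs0.trans hs2
    have hsum : Summable (fun n => (s / t) ^ n * Real.exp (hSum m n)) := by
      refine summable_of_ratio_test_tendsto_lt_one (l := s / t) ((div_lt_one ht0).2 hs2)
        (Eventually.of_forall fun n => by positivity) ?_
      have := (hratio 1).const_mul (s / t)
      rw [mul_one] at this
      refine this.congr (fun n => ?_)
      have hst : 0 < s / t := by positivity
      rw [Real.norm_of_nonneg (by positivity), Real.norm_of_nonneg (by positivity), pow_succ]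
      have := Real.exp_ne_zero (hSum m n)
      have h2 := (pow_pos hst n).ne'
      field_simp
    have hsum2 : Summable (fun n => t⁻¹ ^ n * Real.exp (hSum m n) * B n) := by
      refine summable_of_isBigO_nat hsum (Asymptotics.IsBigO.of_bound 1 ?_)
      filter_upwards [eventually_upper B hB γ hγ s hs1 hs0] with n hn
      have := hB n
      rw [Real.norm_of_nonneg (by positivity), Real.norm_of_nonneg (by positivity), one_mul]
      calc t⁻¹ ^ n * Real.exp (hSum m n) * B n ≤ t⁻¹ ^ n * Real.exp (hSum m n) * s ^ n := by
            gcongr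
        _ = _ := by rw [div_eq_mul_inv, mul_pow]; ring
    exact hsum2.tsum_ofReal_lt_top

end CMS
end

section
/- Let f∈𝓗₊, f≠0, with γ := γ(φ∗_ρ f) ∈ (0,∞). Then there is a slowly increasing c:ℕ→(0,∞) such that sup_N ‖φ_{c;≤N}[t]∗_ρ f‖² < ∞ for every t>γ, and sup_N ‖φ_{c;≤N}[t]∗_ρ f‖² → ∞ as t decreases to γ. -/
open scoped ENNReal NNReal BigOperators
open Filter MeasureTheory

namespace CMS

variable {W : Type*} {G : Type*}

/-- Comparison of the weighted norms for two families of coefficients. -/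
theorem aux_compare {W G I : Type*} [Group G] (act : G → I → I)
    (τ : W → W → Prop) (R : (ℕ → W) → ℝ) (s : W → G) (A a : W) (x : ℕ → W)
    (f : I → ℝ≥0∞) (c c' : ℕ → ℝ) (t t' K : ℝ) (ht : 0 < t) (ht' : 0 < t') (hK : 0 ≤ K)
    (N N' : ℕ) (hN : N ≤ N')
    (h : ∀ n, n ≤ N → t⁻¹ ^ n * c n ≤ K * (t'⁻¹ ^ n * c' n)) :
    normSqE (convE act (phiLe τ R s A a x c t N) f) ≤
      ENNReal.ofReal K ^ 2 * normSqE (convE act (phiLe τ R s A a x c' t' N') f) := by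
  have h1 : ∀ g, phiLe τ R s A a x c t N g ≤
      ENNReal.ofReal K * phiLe τ R s A a x c' t' N' g := by
    intro g
    unfold phiLe
    rw [Finset.mul_sum]
    refine (Finset.sum_le_sum (g := fun n => ENNReal.ofReal K *
      ((ENNReal.ofReal t')⁻¹ ^ n * ENNReal.ofReal (c' n) *
      ∑' w : {w : List W // w ∈ WordSet τ n A a ∧ wprod s w = g},
      ENNReal.ofReal (weight R n (cat w.1 x)))) ?_).trans
      (Finset.sum_le_sum_of_subset (Finset.Icc_subset_Icc_right hN))
    intro n hn
    rw [← mul_assoc]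
    refine mul_le_mul_left ?_ _
    rw [← ENNReal.ofReal_inv_of_pos ht, ← ENNReal.ofReal_inv_of_pos ht',
      ← ENNReal.ofReal_pow (by positivity), ← ENNReal.ofReal_pow (by positivity),
      ← ENNReal.ofReal_mul (by positivity), ← ENNReal.ofReal_mul (by positivity),
      ← ENNReal.ofReal_mul hK]
    exact ENNReal.ofReal_le_ofReal (h n (Finset.mem_Icc.1 hn).2)
  have h2 : ∀ i, convE act (phiLe τ R s A a x c t N) f i ≤
      ENNReal.ofReal K * convE act (phiLe τ R s A a x c' t' N') f i := by
    intro i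
    unfold convE
    rw [← ENNReal.tsum_mul_left]
    refine ENNReal.tsum_le_tsum fun g => ?_
    rw [← mul_assoc]
    exact mul_le_mul_left (h1 g) _
  unfold normSqE innerE
  rw [← ENNReal.tsum_mul_left]
  refine ENNReal.tsum_le_tsum fun i => ?_
  calc _ ≤ _ := mul_le_mul' (h2 i) (h2 i)
    _ = _ := by ring

/-- Construction of a slowly increasing sequence from a monotone sequence of thresholds. -/
theorem aux_slow (M : ℕ → ℕ) (hM : Monotone M) (hM2 : ∀ k, (k + 1) ^ 2 ≤ M k) :
    ∃ c : ℕ → ℝ, SlowlyIncreasing c ∧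
      (∀ k n, n ≤ M k → Real.exp (1 / ((k : ℝ) + 1)) ^ n ≤ c n) ∧
      (∀ ε : ℝ, 0 < ε → ∃ C : ℝ, 0 ≤ C ∧ ∀ n, c n ≤ C * Real.exp ε ^ n) := by
  have hex : ∀ i, ∃ k, i < M k := fun i => ⟨i, by nlinarith [hM2 i]⟩
  classical
  let κ : ℕ → ℕ := fun i => Nat.find (hex i)
  have hκ1 : ∀ i k, i < M k → κ i ≤ k := fun i k h => Nat.find_min' (hex i) h
  have hκ2 : ∀ i k, M k ≤ i → k < κ i := by
    intro i k h
    by_contra hc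
    have h1 : i < M (κ i) := Nat.find_spec (hex i)
    have := hM (not_lt.1 hc)
    omega
  let δ : ℕ → ℝ := fun i => 1 / ((κ i : ℝ) + 1)
  have hδpos : ∀ i, 0 < δ i := fun i => by positivity
  have hδ1 : ∀ i, δ i ≤ 1 := fun i => by
    simp only [δ]
    rw [div_le_one (by positivity)]
    linarith [(Nat.cast_nonneg (κ i) : (0 : ℝ) ≤ _)]
  have hκt : Tendsto κ atTop atTop := by
    rw [tendsto_atTop]
    intro b
    filter_upwards [eventually_ge_atTop (M b)] with i hi
    exact (hκ2 i b hi).le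
  have hδt : Tendsto δ atTop (nhds 0) :=
    (tendsto_one_div_add_atTop_nhds_zero_nat (𝕜 := ℝ)).comp hκt
  let h : ℕ → ℝ := fun n => ∑ i ∈ Finset.range n, δ i
  have hlow : ∀ k n, n ≤ M k → n * (1 / ((k : ℝ) + 1)) ≤ h n := by
    intro k n hn
    calc (n : ℝ) * (1 / ((k : ℝ) + 1)) = ∑ i ∈ Finset.range n, (1 / ((k : ℝ) + 1)) := by simp
      _ ≤ h n := by
        refine Finset.sum_le_sum fun i hi => ?_
        have : κ i ≤ k := hκ1 i k (lt_of_lt_of_le (Finset.mem_range.1 hi) hn)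
        have : (κ i : ℝ) ≤ k := by exact_mod_cast this
        exact one_div_le_one_div_of_le (by positivity) (by linarith)
  have hmono : Monotone h := monotone_nat_of_le_succ fun n => by
    simp only [h, Finset.sum_range_succ]
    linarith [hδpos n]
  have htop : Tendsto h atTop atTop := by
    refine tendsto_atTop_atTop_of_monotone hmono fun b => ?_
    obtain ⟨k, hk⟩ := exists_nat_ge b
    refine ⟨M k, ?_⟩
    have h1 := hlow k (M k) le_rfl
    have h2 : (((k : ℝ) + 1)) ^ 2 ≤ M k := by exact_mod_cast hM2 k
    have h3 : ((k : ℝ) + 1) ≤ M k * (1 / ((k : ℝ) + 1)) := by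
      rw [mul_one_div, le_div_iff₀ (by positivity)]
      nlinarith
    linarith
  refine ⟨fun n => Real.exp (h n), ⟨fun n => Real.exp_pos _, fun m n hmn =>
    Real.exp_le_exp.2 (hmono hmn), Real.tendsto_exp_atTop.comp htop, ?_⟩, ?_, ?_⟩
  · intro k
    have e : (fun n => Real.exp (h (n + k)) / Real.exp (h n)) =
        fun n => Real.exp (∑ i ∈ Finset.range k, δ (n + i)) := by
      funext n
      rw [← Real.exp_sub]
      congr 1
      simp only [h, Finset.sum_range_add]
      ring
    rw [e, ← Real.exp_zero]
    refine (Real.continuous_exp.tendsto 0).comp ?_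
    have : Tendsto (fun n => ∑ i ∈ Finset.range k, δ (n + i)) atTop
        (nhds (∑ i ∈ Finset.range k, (0 : ℝ))) :=
      tendsto_finsetSum _ fun i _ => hδt.comp (tendsto_add_atTop_nat i)
    simpa using this
  · intro k n hn
    rw [← Real.exp_nat_mul]
    exact Real.exp_le_exp.2 (hlow k n hn)
  · intro ε hε
    obtain ⟨n0, hn0⟩ := eventually_atTop.1 (hδt.eventually (gt_mem_nhds hε))
    have key : ∀ n, h n ≤ (min n n0 : ℕ) + n * ε := by
      intro n
      induction n with
      | zero => simp [h]
      | succ n ih =>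
        have e : h (n + 1) = h n + δ n := Finset.sum_range_succ _ _
        rw [e]
        push_cast
        rcases lt_or_ge n n0 with hlt | hge
        · have e1 : min n n0 = n := by omega
          rw [e1] at ih
          have e2 : min ((n : ℝ) + 1) n0 = n + 1 := min_eq_left (by exact_mod_cast hlt)
          rw [e2]
          nlinarith [hδ1 n]
        · have e1 : min n n0 = n0 := by omega
          rw [e1] at ih
          have e2 : min ((n : ℝ) + 1) n0 = n0 :=
            min_eq_right (by exact_mod_cast (by omega : n0 ≤ n + 1))
          rw [e2]
          nlinarith [hn0 n hge]
    refine ⟨Real.exp n0, (Real.exp_pos _).le, fun n => ?_⟩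
    rw [← Real.exp_nat_mul, ← Real.exp_add]
    refine Real.exp_le_exp.2 ((key n).trans ?_)
    have : ((min n n0 : ℕ) : ℝ) ≤ n0 := by exact_mod_cast min_le_right _ _
    linarith

/-- (Lemma `lemma:cphiastastphi`.) For nonzero `f ∈ 𝓗₊` with
`γ = γ(φ ∗_ρ f) ∈ (0,∞)` there is a slowly increasing `c` such that
`sup_N ‖φ_{c;≤N}[t] ∗_ρ f‖² < ∞` for every `t > γ`, while
`sup_N ‖φ_{c;≤N}[t] ∗_ρ f‖² → ∞` as `t ↓ γ`. -/
theorem statement15 {W G J : Type*} [Countable W] [Countable G] [Group G] [Countable J]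
    (τ : W → W → Prop) (R : (ℕ → W) → ℝ) (s : W → G)
    (Hfam : J → Subgroup G)
    (hmix : Mixing τ)
    (hRpos : ∀ x ∈ SigmaPlus τ, 0 < R x)
    (hHolder : ∃ C₀ θ : ℝ, LocallyHolder τ R C₀ θ)
    (A a : W) (x : ℕ → W)
    (hx : x ∈ SigmaPlus τ) (hxA : x 0 = A) (haA : Occurs τ [a, A])
    (f : (Σ j, G ⧸ Hfam j) → ℝ≥0∞) (hf : MemL2 f) (hf0 : f ≠ 0)
    (γv : ℝ) (hγv : γv = gammaNorm (rhoIdx Hfam) τ R s A a x f) (hγpos : 0 < γv) :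
    ∃ c : ℕ → ℝ, SlowlyIncreasing c ∧
      (∀ t : ℝ, γv < t →
        (⨆ N, normSqE (convE (rhoIdx Hfam) (phiLe τ R s A a x c t N) f)) < ⊤) ∧
      Tendsto (fun t : ℝ =>
          ⨆ N, normSqE (convE (rhoIdx Hfam) (phiLe τ R s A a x c t N) f))
        (nhdsWithin γv (Set.Ioi γv)) (nhds ⊤) := by
  have cmp := aux_compare (rhoIdx Hfam) τ R s A a x f
  set Φ : (ℕ → ℝ) → ℝ → ℕ → ℝ≥0∞ := fun c t N =>
    normSqE (convE (rhoIdx Hfam) (phiLe τ R s A a x c t N) f) with hΦ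
  change ∃ c : ℕ → ℝ, SlowlyIncreasing c ∧
      (∀ t : ℝ, γv < t → (⨆ N, Φ c t N) < ⊤) ∧
      Tendsto (fun t : ℝ => ⨆ N, Φ c t N) (nhdsWithin γv (Set.Ioi γv)) (nhds ⊤)
  set S : Set ℝ := {t : ℝ | 0 < t ∧ (⨆ N, Φ (fun _ => 1) t N) < ⊤} with hS
  have hγS : γv = sInf S := hγv
  have hne : S.Nonempty := by
    by_contra hc
    rw [Set.not_nonempty_iff_eq_empty] at hc
    rw [hc, Real.sInf_empty] at hγS
    linarith
  have hbdd : BddBelow S := ⟨0, fun t ht => ht.1.le⟩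
  have hfin : ∀ t, γv < t → (⨆ N, Φ (fun _ => 1) t N) < ⊤ := by
    intro t ht
    rw [hγS] at ht
    obtain ⟨u, hu, hut⟩ := exists_lt_of_csInf_lt hne ht
    refine lt_of_le_of_lt (iSup_mono fun N => ?_) hu.2
    have := cmp (fun _ => 1) (fun _ => 1) t u 1 (hu.1.trans hut) hu.1 zero_le_one N N le_rfl
      (fun n _ => by
        simp only [mul_one, one_mul]
        have := hu.1
        have := this.trans hut
        gcongr)
    simpa using this
  have hinf : ∀ t, 0 < t → t < γv → (⨆ N, Φ (fun _ => 1) t N) = ⊤ := by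
    intro t ht htγ
    by_contra hc
    have : t ∈ S := ⟨ht, lt_top_iff_ne_top.2 hc⟩
    have := csInf_le hbdd this
    linarith
  have hmonoN : ∀ c : ℕ → ℝ, ∀ t, 0 < t → Monotone (Φ c t) := by
    intro c t ht N N' hNN
    have := cmp c c t t 1 ht ht zero_le_one N N' hNN (fun n _ => by rw [one_mul])
    simpa using this
  have hm : ∀ k : ℕ, ∃ m, (k : ℝ≥0∞) <
      Φ (fun _ => 1) (γv * Real.exp (-(1 / ((k : ℝ) + 1)))) m := by
    intro k
    have hlt : Real.exp (-(1 / ((k : ℝ) + 1))) < 1 := by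
      rw [Real.exp_lt_one_iff, neg_lt_zero]
      positivity
    have := hinf (γv * Real.exp (-(1 / ((k : ℝ) + 1)))) (by positivity)
      (by nlinarith)
    have h2 : (k : ℝ≥0∞) < ⨆ N, Φ (fun _ => 1) (γv * Real.exp (-(1 / ((k : ℝ) + 1)))) N := by
      rw [this]
      exact ENNReal.natCast_lt_top k
    exact lt_iSup_iff.1 h2
  choose m hm using hm
  let M : ℕ → ℕ := fun k => (∑ j ∈ Finset.range (k + 1), m j) + (k + 1) ^ 2
  have hMm : Monotone M := by
    intro k l hkl
    refine add_le_add (Finset.sum_le_sum_of_subset ?_) (Nat.pow_le_pow_left (by omega) 2)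
    exact Finset.range_mono (by omega)
  have hMk : ∀ k, m k ≤ M k := fun k =>
    (Finset.single_le_sum (f := m) (fun _ _ => Nat.zero_le _)
      (Finset.self_mem_range_succ k)).trans (Nat.le_add_right _ _)
  obtain ⟨c, hc, hc1, hc2⟩ := aux_slow M hMm (fun k => Nat.le_add_left _ _)
  have hcγ : ∀ k : ℕ, (k : ℝ≥0∞) < Φ c γv (M k) := by
    intro k
    refine (hm k).trans_le ((hmonoN _ _ (by positivity) (hMk k)).trans ?_)
    have := cmp (fun _ => 1) c (γv * Real.exp (-(1 / ((k : ℝ) + 1)))) γv 1 (by positivity)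
      hγpos zero_le_one (M k) (M k) le_rfl (fun n hn => by
        rw [mul_inv, mul_pow, ← Real.exp_neg, neg_neg, mul_one, one_mul]
        exact mul_le_mul_of_nonneg_left (hc1 k n hn) (by positivity))
    simpa using this
  refine ⟨c, hc, ?_, ?_⟩
  · intro t ht
    have htpos : 0 < t := hγpos.trans ht
    obtain ⟨u, hu1, hu2⟩ := exists_between ht
    have hupos : 0 < u := hγpos.trans hu1
    have hlog : 0 < Real.log (t / u) := Real.log_pos (by rwa [one_lt_div hupos])
    obtain ⟨C, hC, hCn⟩ := hc2 _ hlog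
    rw [Real.exp_log (by positivity)] at hCn
    have hle : (⨆ N, Φ c t N) ≤ ENNReal.ofReal C ^ 2 * ⨆ N, Φ (fun _ => 1) u N := by
      refine iSup_le fun N => ?_
      refine (cmp c (fun _ => 1) t u C htpos hupos hC N N le_rfl (fun n _ => ?_)).trans
        (mul_le_mul_right (le_iSup (fun N => Φ (fun _ => 1) u N) N) _)
      calc t⁻¹ ^ n * c n ≤ t⁻¹ ^ n * (C * (t / u) ^ n) :=
            mul_le_mul_of_nonneg_left (hCn n) (by positivity)
        _ = C * (u⁻¹ ^ n * 1) := by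
            simp only [div_pow, inv_pow]
            field_simp
    exact hle.trans_lt (ENNReal.mul_lt_top (ENNReal.pow_lt_top ENNReal.ofReal_lt_top)
      (hfin u hu1))
  · rw [ENNReal.tendsto_nhds_top_iff_nat]
    intro k
    set N := M k
    have hlim : Tendsto (fun t : ℝ => ENNReal.ofReal (t / γv) ^ N * ENNReal.ofReal (t / γv) ^ N)
        (nhds γv) (nhds 1) := by
      have h1 : Tendsto (fun t : ℝ => ENNReal.ofReal ((t / γv) ^ N * (t / γv) ^ N)) (nhds γv)
          (nhds (ENNReal.ofReal ((γv / γv) ^ N * (γv / γv) ^ N))) := by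
        refine ENNReal.tendsto_ofReal ?_
        have : Continuous fun t : ℝ => (t / γv) ^ N * (t / γv) ^ N := by fun_prop
        exact this.tendsto γv
      rw [div_self hγpos.ne'] at h1
      simp only [one_pow, mul_one, ENNReal.ofReal_one] at h1
      refine h1.congr' ?_
      filter_upwards [lt_mem_nhds hγpos] with t ht
      rw [ENNReal.ofReal_mul (by positivity), ENNReal.ofReal_pow (by positivity)]
    have hlim2 := ENNReal.Tendsto.mul_const (b := (k : ℝ≥0∞)) hlim (Or.inl one_ne_zero)
    rw [one_mul] at hlim2
    have hev := (hlim2.eventually (gt_mem_nhds (hcγ k))).filter_mono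
      (nhdsWithin_le_nhds (s := Set.Ioi γv))
    filter_upwards [hev, self_mem_nhdsWithin] with t ht htγ
    have htγ' : γv < t := htγ
    have htpos : 0 < t := hγpos.trans htγ'
    refine lt_of_lt_of_le ?_ (le_iSup _ N)
    have h3 := cmp c c γv t ((t / γv) ^ N) hγpos htpos (by positivity) N N le_rfl (fun n hn => by
      have hcn := hc.1 n
      have h1 : (t / γv) ^ n ≤ (t / γv) ^ N :=
        pow_le_pow_right₀ ((one_le_div hγpos).2 htγ'.le) hn
      calc γv⁻¹ ^ n * c n = (t / γv) ^ n * (t⁻¹ ^ n * c n) := by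
            simp only [div_pow, inv_pow]
            field_simp
        _ ≤ _ := mul_le_mul_of_nonneg_right h1 (by positivity))
    rw [ENNReal.ofReal_pow (by positivity), sq] at h3
    by_contra hcon
    rw [not_lt] at hcon
    have h4 := h3.trans (mul_le_mul_right hcon _)
    exact absurd ht (not_lt.2 h4)

end CMS
end

section
/- Let F₂ be the free group on two generators a,b with S={a,a⁻¹,b,b⁻¹}, and let Σ⁺={x∈S^ℕ : x_{i+1}≠x_i⁻¹ for all i} be the space of infinite reduced words. Let ν be a Borel probability measure on Σ⁺ satisfying ν([u]) = (1/4)·3^{−(m−1)} for every reduced word u of length m≥1, where [u]={x∈Σ⁺ : x_{i−1}=u_i for 1≤i≤m}. For g∈F₂ and x∈Σ⁺, let g⁻¹∧x denote the length of the longest common prefix of the reduced word of g⁻¹ and x, and set q(g,x)=|g|−2(g⁻¹∧x), where |g| is the reduced word length. Then for every g∈F₂, ∫_{Σ⁺} 3^{−q(g,x)/2} dν(x) = (1 + |g|/2)·3^{−|g|/2}. -/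
open scoped ENNReal NNReal BigOperators
open Filter MeasureTheory

namespace CMS

variable {W : Type*} {G : Type*}

/-- The formal inverse of a letter of the free group alphabet. -/
def invLetter (p : Fin 2 × Bool) : Fin 2 × Bool := (p.1, !p.2)

/-- The space `Σ⁺` of infinite reduced words over `{a,a⁻¹,b,b⁻¹}`. -/
def RedWords : Set (ℕ → Fin 2 × Bool) :=
  {x | ∀ i, x (i + 1) ≠ invLetter (x i)}

/-- Cylinder `[u]` in the space of infinite reduced words. -/
def cylRed (u : List (Fin 2 × Bool)) : Set {x : ℕ → Fin 2 × Bool // x ∈ RedWords} :=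
  {x | ∀ i : Fin u.length, x.1 i = u.get i}

/-- A finite word is reduced. -/
def IsReduced (u : List (Fin 2 × Bool)) : Prop :=
  u.Chain' fun p q => q ≠ invLetter p

/-- `g⁻¹ ∧ x`: the length of the longest common prefix of the reduced word of `g⁻¹`
and `x`. -/
noncomputable def prefixLen (w : List (Fin 2 × Bool)) (x : ℕ → Fin 2 × Bool) : ℕ :=
  sSup {k | w.take k = (List.range k).map x}

theorem mem_common_iff (w : List (Fin 2 × Bool)) (x : ℕ → Fin 2 × Bool) (k : ℕ) :
    w.take k = (List.range k).map x ↔ ∀ i < k, w[i]? = some (x i) := by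
  constructor
  · intro h i hi
    have := congrArg (fun l => l[i]?) h
    simpa [List.getElem?_take, hi] using this
  · intro h
    apply List.ext_getElem?
    intro i
    by_cases hi : i < k
    · simp [List.getElem?_take, hi, h i hi]
    · simp [List.getElem?_take, hi]

theorem common_le (w : List (Fin 2 × Bool)) (x : ℕ → Fin 2 × Bool) (k : ℕ)
    (h : ∀ i < k, w[i]? = some (x i)) : k ≤ w.length := by
  by_contra hk
  have := h w.length (by omega)
  simp at this

theorem le_prefixLen_iff (w : List (Fin 2 × Bool)) (x : ℕ → Fin 2 × Bool) (j : ℕ) :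
    j ≤ prefixLen w x ↔ ∀ i < j, w[i]? = some (x i) := by
  have hb : BddAbove {k | w.take k = (List.range k).map x} :=
    ⟨w.length, fun k hk => common_le w x k ((mem_common_iff w x k).1 hk)⟩
  have hn : {k | w.take k = (List.range k).map x}.Nonempty := ⟨0, by simp⟩
  have hm := (mem_common_iff w x _).1 (Nat.sSup_mem hn hb)
  constructor
  · intro h i hi
    exact hm i (lt_of_lt_of_le hi h)
  · intro h
    exact le_csSup hb ((mem_common_iff w x j).2 h)

theorem prefixLen_le (w : List (Fin 2 × Bool)) (x : ℕ → Fin 2 × Bool) :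
    prefixLen w x ≤ w.length :=
  common_le w x _ ((le_prefixLen_iff w x _).1 le_rfl)

theorem mem_cyl_iff (w : List (Fin 2 × Bool)) (x : {x : ℕ → Fin 2 × Bool // x ∈ RedWords})
    (j : ℕ) (hj : j ≤ w.length) :
    x ∈ cylRed (w.take j) ↔ j ≤ prefixLen w x.1 := by
  rw [le_prefixLen_iff]
  constructor
  · intro h i hi
    have := h ⟨i, by simp; omega⟩
    simp at this
    rw [this]
    simp
  · rintro h ⟨i, hi⟩
    simp at hi
    have := h i hi.1
    rw [List.getElem?_eq_getElem hi.2] at this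
    simpa using (Option.some.inj this).symm

theorem measurableSet_cylRed (u : List (Fin 2 × Bool)) : MeasurableSet (cylRed u) := by
  have : cylRed u = ⋂ i : Fin u.length, (fun x : {x : ℕ → Fin 2 × Bool // x ∈ RedWords} =>
      x.1 (i : ℕ)) ⁻¹' {u.get i} := by
    ext x; simp [cylRed]
  rw [this]
  refine MeasurableSet.iInter fun i => ?_
  exact ((measurable_pi_apply (i : ℕ)).comp measurable_subtype_coe) (measurableSet_singleton _)

theorem three_pow_sum (k : ℕ) :
    (3 : ℝ≥0∞) ^ k = 1 + ∑ j ∈ Finset.range k, 2 * 3 ^ j := by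
  induction k with
  | zero => simp
  | succ k ih =>
    rw [Finset.sum_range_succ, ← add_assoc, ← ih]
    ring

theorem three_pow_common_len (w : List (Fin 2 × Bool))
    (x : {x : ℕ → Fin 2 × Bool // x ∈ RedWords}) :
    (3 : ℝ≥0∞) ^ (prefixLen w x.1) = 1 + ∑ j ∈ Finset.range w.length,
      (cylRed (w.take (j + 1))).indicator (fun _ => (2 * 3 ^ j : ℝ≥0∞)) x := by
  classical
  rw [three_pow_sum]
  congr 1
  rw [← Finset.sum_subset (Finset.range_mono (prefixLen_le w x.1))]
  · refine Finset.sum_congr rfl fun j hj => ?_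
    have hj' := Finset.mem_range.1 hj
    rw [Set.indicator_of_mem]
    exact (mem_cyl_iff w x (j + 1) (by have := prefixLen_le w x.1; omega)).2 hj'
  · intro j hj hj'
    rw [Finset.mem_range] at hj hj'
    rw [Set.indicator_of_notMem]
    rw [mem_cyl_iff w x (j + 1) (by omega)]
    omega

theorem lintegral_three_pow
    (ν : Measure {x : ℕ → Fin 2 × Bool // x ∈ RedWords})
    (hprob : IsProbabilityMeasure ν)
    (hcyl : ∀ u : List (Fin 2 × Bool), u ≠ [] → IsReduced u →
      ν (cylRed u) = ENNReal.ofReal ((1 / 4 : ℝ) * ((3 : ℝ)⁻¹) ^ (u.length - 1)))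
    (w : List (Fin 2 × Bool)) (hw : IsReduced w) :
    ∫⁻ x, (3 : ℝ≥0∞) ^ (prefixLen w x.1) ∂ν = ENNReal.ofReal (1 + (w.length : ℝ) / 2) := by
  simp_rw [three_pow_common_len]
  rw [lintegral_add_left measurable_const, lintegral_finsetSum _ (fun j _ =>
    measurable_const.indicator (measurableSet_cylRed _))]
  have h : ∀ j ∈ Finset.range w.length,
      ∫⁻ x, (cylRed (w.take (j + 1))).indicator (fun _ => (2 * 3 ^ j : ℝ≥0∞)) x ∂ν
        = ENNReal.ofReal (1 / 2) := by
    intro j hj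
    rw [Finset.mem_range] at hj
    rw [lintegral_indicator_const (measurableSet_cylRed _), hcyl]
    · have e : (2 * 3 ^ j : ℝ≥0∞) = ENNReal.ofReal (2 * 3 ^ j) := by
        rw [ENNReal.ofReal_mul (by norm_num), ENNReal.ofReal_pow (by norm_num)]
        norm_num
      rw [e, ← ENNReal.ofReal_mul (by positivity)]
      congr 1
      have : (w.take (j + 1)).length - 1 = j := by simp; omega
      rw [this, inv_pow]
      field_simp
      norm_num
    · intro h0
      have := congrArg List.length h0
      simp at this
      simp [this] at hj
    · exact List.IsChain.take hw _
  rw [Finset.sum_congr rfl h]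
  simp only [lintegral_const, measure_univ, mul_one, Finset.sum_const, Finset.card_range,
    nsmul_eq_mul]
  rw [ENNReal.ofReal_add (by norm_num) (by positivity), ENNReal.ofReal_one,
    show (w.length : ℝ) / 2 = w.length * (1 / 2) by ring,
    ENNReal.ofReal_mul (by positivity), ENNReal.ofReal_natCast]

theorem isReduced_toWord' (g : FreeGroup (Fin 2)) : IsReduced (FreeGroup.toWord g) := by
  have h : FreeGroup.IsReduced (FreeGroup.toWord g) := FreeGroup.isReduced_toWord
  refine List.IsChain.imp ?_ h
  rintro ⟨a, b⟩ ⟨c, d⟩ h1 h2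
  simp only [invLetter, Prod.mk.injEq] at h2
  have := h1 h2.1.symm
  simp only at this
  rw [h2.2] at this
  simp at this

/-- (Boundary spherical function computation for the free group.)
If `ν` is the Borel probability on the space of infinite reduced words with
`ν([u]) = (1/4)·3^{-(m-1)}` for every reduced word `u` of length `m ≥ 1`, then for
every `g ∈ F₂`, with `q(g,x) = |g| - 2(g⁻¹ ∧ x)`,
`∫ 3^{-q(g,x)/2} dν(x) = (1 + |g|/2)·3^{-|g|/2}`. -/
theorem statement19
    (ν : Measure {x : ℕ → Fin 2 × Bool // x ∈ RedWords})
    (hprob : IsProbabilityMeasure ν)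
    (hcyl : ∀ u : List (Fin 2 × Bool), u ≠ [] → IsReduced u →
      ν (cylRed u) = ENNReal.ofReal ((1 / 4 : ℝ) * ((3 : ℝ)⁻¹) ^ (u.length - 1))) :
    ∀ g : FreeGroup (Fin 2),
      (∫⁻ x, ENNReal.ofReal
          ((3 : ℝ) ^ (-((((FreeGroup.toWord g).length : ℝ) -
              2 * (prefixLen (FreeGroup.toWord g⁻¹) x.1 : ℝ)) / 2))) ∂ν)
        = ENNReal.ofReal
            ((1 + ((FreeGroup.toWord g).length : ℝ) / 2) *
              (3 : ℝ) ^ (-(((FreeGroup.toWord g).length : ℝ) / 2))) := by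
  intro g
  have hlen : (FreeGroup.toWord g⁻¹).length = (FreeGroup.toWord g).length := by
    rw [FreeGroup.toWord_inv, FreeGroup.invRev_length]
  have key := lintegral_three_pow ν hprob hcyl _ (isReduced_toWord' g⁻¹)
  rw [hlen] at key
  have hpt : ∀ x : {x : ℕ → Fin 2 × Bool // x ∈ RedWords}, ENNReal.ofReal
      ((3 : ℝ) ^ (-((((FreeGroup.toWord g).length : ℝ) -
        2 * (prefixLen (FreeGroup.toWord g⁻¹) x.1 : ℝ)) / 2))) =
      ENNReal.ofReal ((3 : ℝ) ^ (-(((FreeGroup.toWord g).length : ℝ) / 2))) *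
        (3 : ℝ≥0∞) ^ (prefixLen (FreeGroup.toWord g⁻¹) x.1) := by
    intro x
    have e : (3 : ℝ≥0∞) ^ (prefixLen (FreeGroup.toWord g⁻¹) x.1) =
        ENNReal.ofReal ((3 : ℝ) ^ (prefixLen (FreeGroup.toWord g⁻¹) x.1)) := by
      rw [ENNReal.ofReal_pow (by norm_num)]
      norm_num
    rw [e, ← ENNReal.ofReal_mul (by positivity), ← Real.rpow_natCast,
      ← Real.rpow_add (by norm_num)]
    congr 2
    ring
  simp_rw [hpt]
  rw [lintegral_const_mul' _ _ ENNReal.ofReal_ne_top, key,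
    ← ENNReal.ofReal_mul (by positivity), mul_comm]

end CMS
end
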